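/- Under Jacod's density hypothesis, let t = t_0 < t_1 < ⋯ < t_{n+1} = T and let Z_0, …, Z_n be bounded random variables with Z_i F_{t_i}-measurable, and set F^M_s(x) := p_s(x) 1_{X*_s > x}. There exists an F_t ⊗ B(ℝ)-measurable function w : Ω × ℝ → ℝ such that for P^L-almost every x, w(·,x) is a version of E_P[ Σ_{i=0}^n Z_i (F^M_{t_{i+1}}(x) − F^M_{t_i}(x)) | F_t ]; and for every such w one has, P-almost surely, E_P[ Σ_{i=0}^n Z_i 1_{t_i < τ ≤ t_{i+1}} | G^M_t ] = − w(·,L) / p_t(L). (Key step in the proof of Proposition 3.2: the recovery-payment term for stepwise F-predictable recovery processes under full information.) -/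

import Mathlib

open MeasureTheory ProbabilityTheory Set
open scoped NNReal Classical

noncomputable section

/-- Running infimum `X*_t = inf_{s ≤ t} X_s` of the process `X` over the time interval
`[0, t]`. -/
def runInf {Ω : Type*} (X : ℝ≥0 → Ω → ℝ) (t : ℝ≥0) (ω : Ω) : ℝ :=
  ⨅ s : Set.Icc (0 : ℝ≥0) t, X s.1 ω

/-- The supermartingale `F^M_s(x) := p_s(x) 1_{X*_s > x}`. -/
def FM {Ω : Type*} (p : ℝ≥0 → ℝ → Ω → ℝ) (X : ℝ≥0 → Ω → ℝ) (s : ℝ≥0) (x : ℝ) (ω : Ω) : ℝ :=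
  p s x ω * (if x < runInf X s ω then 1 else 0)


theorem prod_le_aux {Ω : Type*} {m m0 : MeasurableSpace Ω} (hm : m ≤ m0) :
    m.prod (inferInstance : MeasurableSpace ℝ) ≤ m0.prod inferInstance :=
  sup_le_sup (MeasurableSpace.comap_mono hm) le_rfl

theorem meas_section {Ω β : Type*} {m : MeasurableSpace Ω} [MeasurableSpace β] {w : Ω × ℝ → β}
    (hw : Measurable[m.prod inferInstance] w) (x : ℝ) : Measurable[m] fun ω => w (ω, x) :=
  hw.comp (@measurable_prodMk_right Ω ℝ m _ x)

theorem exists_version_set {Ω : Type*} {m m0 : MeasurableSpace Ω} (hm : m ≤ m0)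
    (P : Measure Ω) [IsProbabilityMeasure P] (S : Set (Ω × ℝ)) (hS : MeasurableSet S) :
    ∃ w : Ω × ℝ → ENNReal, Measurable[m.prod inferInstance] w ∧
      ∀ x, ∀ A, MeasurableSet[m] A →
        ∫⁻ ω in A, w (ω, x) ∂P = ∫⁻ ω in A, S.indicator 1 (ω, x) ∂P := by
  induction S, hS using MeasurableSpace.induction_on_inter generateFrom_prod.symm isPiSystem_prod with
  | empty => exact ⟨0, measurable_const, by simp⟩
  | basic S hS =>
    obtain ⟨A, hA, B, hB, rfl⟩ := hS
    refine ⟨fun q => (P⁻[A.indicator 1|m]) q.1 * B.indicator 1 q.2, ?_, ?_⟩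
    · refine Measurable.mul ?_ ?_
      · exact (measurable_condLExp m P _).comp (@measurable_fst Ω ℝ m _)
      · exact (measurable_one.indicator (show MeasurableSet B from hB)).comp (@measurable_snd Ω ℝ m _)
    · intro x C hC
      by_cases hx : x ∈ B
      · simp only [hx, indicator_of_mem, Pi.one_apply, mul_one]
        rw [setLIntegral_condLExp hm _ _ hC]
        refine lintegral_congr fun ω => ?_
        by_cases h : ω ∈ A <;> simp [h, hx]
      · have : ∀ ω, (A ×ˢ B).indicator (1 : Ω × ℝ → ENNReal) (ω, x) = 0 := by
          intro ω; simp [hx]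
        simp [hx]
  | compl S hS ih =>
    obtain ⟨w, hw, h⟩ := ih
    refine ⟨fun q => 1 - w q, Measurable.const_sub hw 1, ?_⟩
    intro x A hA
    have hwx : Measurable fun ω => w (ω, x) := (meas_section hw x).mono hm le_rfl
    have hSx : Measurable fun ω => S.indicator (1 : Ω × ℝ → ENNReal) (ω, x) :=
      meas_section (measurable_one.indicator hS) x
    have hle1 : (fun ω => w (ω, x)) ≤ᵐ[P] fun _ => 1 := by
      apply ae_le_of_ae_le_trim (hm := hm)
      apply ae_le_of_forall_setLIntegral_le_of_sigmaFinite (μ := P.trim hm) (meas_section hw x)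
      intro s hs _
      rw [restrict_trim hm P hs, lintegral_trim hm (meas_section hw x), 
        lintegral_trim hm measurable_const, h x s hs]
      refine lintegral_mono fun ω => ?_
      exact indicator_le_self' (by simp) _
    have hfin : ∫⁻ ω in A, S.indicator (1 : Ω × ℝ → ENNReal) (ω, x) ∂P ≠ ⊤ := by
      refine ((lintegral_mono (g := fun _ => 1) fun ω => ?_).trans_lt ?_).ne
      · exact indicator_le_self' (by simp) _
      · simp
    rw [lintegral_sub hwx (by rw [h x A hA]; exact hfin) (ae_restrict_of_ae hle1), h x A hA,
      ← lintegral_sub (f := fun _ => 1) hSx hfin (ae_of_all _ fun ω => indicator_le_self' (by simp) _)]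
    refine lintegral_congr fun ω => ?_
    by_cases hq : (ω, x) ∈ S <;> simp [hq]
  | iUnion f hd hf ih =>
    choose w hw h using ih
    refine ⟨fun q => ∑' k, w k q, ?_, ?_⟩
    · exact Measurable.ennreal_tsum hw
    · intro x A hA
      rw [lintegral_tsum fun k => ((meas_section (hw k) x).mono hm le_rfl).aemeasurable]
      simp_rw [h _ x A hA]
      rw [← lintegral_tsum fun k =>
        (meas_section (measurable_one.indicator (hf k)) x).aemeasurable]
      refine lintegral_congr fun ω => ?_
      by_cases hq : (ω, x) ∈ ⋃ k, f k
      · obtain ⟨k, hk⟩ := mem_iUnion.1 hq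
        rw [tsum_eq_single k]
        · simp only [hk, hq, indicator_of_mem]
        · intro j hj
          refine indicator_of_notMem (fun hj' => ?_) _
          exact (Set.disjoint_left.1 (hd hj)) hj' hk
      · rw [indicator_of_notMem hq]
        simp only [mem_iUnion, not_exists] at hq
        simp [hq]

theorem exists_version {Ω : Type*} {m m0 : MeasurableSpace Ω} (hm : m ≤ m0)
    (P : Measure Ω) [IsProbabilityMeasure P] (f : Ω × ℝ → ENNReal) (hf : Measurable f) :
    ∃ w : Ω × ℝ → ENNReal, Measurable[m.prod inferInstance] w ∧
      ∀ x, ∀ A, MeasurableSet[m] A →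
        ∫⁻ ω in A, w (ω, x) ∂P = ∫⁻ ω in A, f (ω, x) ∂P := by
  refine Measurable.ennreal_induction (motive := fun f => ∃ w : Ω × ℝ → ENNReal,
    Measurable[m.prod inferInstance] w ∧ ∀ x, ∀ A, MeasurableSet[m] A →
        ∫⁻ ω in A, w (ω, x) ∂P = ∫⁻ ω in A, f (ω, x) ∂P) ?_ ?_ ?_ hf
  · intro c S hS
    obtain ⟨w, hw, h⟩ := exists_version_set hm P S hS
    refine ⟨fun q => c * w q, Measurable.const_mul hw c, fun x A hA => ?_⟩
    rw [lintegral_const_mul _ ((meas_section hw x).mono hm le_rfl), h x A hA,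
      ← lintegral_const_mul _ (meas_section (measurable_one.indicator hS) x)]
    refine lintegral_congr fun ω => ?_
    by_cases hq : (ω, x) ∈ S <;> simp [hq]
  · intro f g _ hf hg ihf ihg
    obtain ⟨w, hw, h⟩ := ihf
    obtain ⟨v, hv, h'⟩ := ihg
    refine ⟨fun q => w q + v q, Measurable.add hw hv, fun x A hA => ?_⟩
    simp only [Pi.add_apply]
    rw [lintegral_add_left ((meas_section hw x).mono hm le_rfl), h x A hA, h' x A hA,
      lintegral_add_left (meas_section hf x)]
  · intro f hf hmono ih
    choose w hw h using ih
    refine ⟨fun q => ⨆ k, w k q, Measurable.iSup hw, fun x A hA => ?_⟩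
    have hle : ∀ k, ∀ᵐ ω ∂P, w k (ω, x) ≤ w (k+1) (ω, x) := by
      intro k
      apply ae_le_of_ae_le_trim (hm := hm)
      apply ae_le_of_forall_setLIntegral_le_of_sigmaFinite (μ := P.trim hm)
        (meas_section (hw k) x)
      intro s hs _
      rw [restrict_trim hm P hs, lintegral_trim hm (meas_section (hw k) x),
        lintegral_trim hm (meas_section (hw (k+1)) x), h k x s hs, h (k+1) x s hs]
      exact lintegral_mono fun ω => hmono (Nat.le_succ k) _
    rw [lintegral_iSup_ae (fun k => (meas_section (hw k) x).mono hm le_rfl)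
      (fun k => ae_restrict_of_ae (hle k))]
    simp_rw [h _ x A hA]
    rw [lintegral_iSup (fun k => meas_section (hf k) x)
      (fun i j hij ω => hmono hij _)]

theorem exists_version_real {Ω : Type*} {m m0 : MeasurableSpace Ω} (hm : m ≤ m0)
    (P : Measure Ω) [IsProbabilityMeasure P] (f : Ω × ℝ → ℝ) (hf : Measurable f) :
    ∃ w : Ω × ℝ → ℝ, Measurable[m.prod inferInstance] w ∧
      ∀ x, Integrable (fun ω => f (ω, x)) P →
        (fun ω => w (ω, x)) =ᵐ[P] P[fun ω => f (ω, x)|m] := by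
  have key : ∀ g : Ω × ℝ → ENNReal, Measurable g → ∃ w : Ω × ℝ → ENNReal,
      Measurable[m.prod inferInstance] w ∧
      ∀ x, ∫⁻ ω, g (ω, x) ∂P ≠ ⊤ → Integrable (fun ω => (w (ω, x)).toReal) P ∧
        ∀ A, MeasurableSet[m] A →
        ∫ ω in A, (w (ω, x)).toReal ∂P = ∫ ω in A, (g (ω, x)).toReal ∂P := by
    intro g hg
    obtain ⟨w, hw, h⟩ := exists_version hm P g hg
    refine ⟨w, hw, fun x hx => ?_⟩
    have hwx : Measurable fun ω => w (ω, x) := (meas_section hw x).mono hm le_rfl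
    have hgx : Measurable fun ω => g (ω, x) := meas_section hg x
    have hwi : ∫⁻ ω, w (ω, x) ∂P ≠ ⊤ := by
      have := h x univ MeasurableSet.univ
      simp only [Measure.restrict_univ] at this
      rwa [this]
    refine ⟨integrable_toReal_of_lintegral_ne_top hwx.aemeasurable hwi, fun A hA => ?_⟩
    rw [integral_toReal hwx.aemeasurable (ae_restrict_of_ae (ae_lt_top hwx hwi)),
      integral_toReal hgx.aemeasurable (ae_restrict_of_ae (ae_lt_top hgx hx)), h x A hA]
  obtain ⟨w₁, hw₁, h₁⟩ := key (fun q => ENNReal.ofReal (f q)) hf.ennreal_ofReal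
  obtain ⟨w₂, hw₂, h₂⟩ := key (fun q => ENNReal.ofReal (-f q)) hf.neg.ennreal_ofReal
  refine ⟨fun q => (w₁ q).toReal - (w₂ q).toReal,
    Measurable.sub (Measurable.ennreal_toReal hw₁) (Measurable.ennreal_toReal hw₂), 
    fun x hx => ?_⟩
  have hfin : ∀ g : Ω → ℝ, Integrable g P → ∫⁻ ω, ENNReal.ofReal (g ω) ∂P ≠ ⊤ := by
    intro g hg
    exact (hg.lintegral_lt_top).ne
  obtain ⟨i₁, e₁⟩ := h₁ x (hfin _ hx)
  obtain ⟨i₂, e₂⟩ := h₂ x (hfin _ hx.neg)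
  refine ae_eq_condExp_of_forall_setIntegral_eq hm hx (fun s _ _ => (i₁.sub i₂).integrableOn) ?_ ?_
  · intro s hs _
    rw [integral_sub i₁.integrableOn i₂.integrableOn, e₁ s hs, e₂ s hs,
      ← integral_sub]
    · refine integral_congr_ae (ae_of_all _ fun ω => ?_)
      simp only [ENNReal.toReal_ofReal']
      rcases le_total 0 (f (ω, x)) with h | h
      · rw [max_eq_left h, max_eq_right (by linarith)]; ring
      · rw [max_eq_right h, max_eq_left (by linarith)]; ring
    · simp only [ENNReal.toReal_ofReal']
      exact hx.pos_part.integrableOn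
    · simp only [ENNReal.toReal_ofReal']
      exact hx.neg_part.integrableOn
  · refine (Measurable.stronglyMeasurable ?_).aestronglyMeasurable
    exact Measurable.sub (Measurable.ennreal_toReal (meas_section hw₁ x))
      (Measurable.ennreal_toReal (meas_section hw₂ x))

theorem density_integrable {Ω : Type*} {m m0 : MeasurableSpace Ω} (hm : m ≤ m0)
    (P : Measure Ω) [IsProbabilityMeasure P] (L : Ω → ℝ) (hL : Measurable L)
    (p : ℝ → Ω → ℝ) (hp_nonneg : ∀ x ω, 0 ≤ p x ω)
    (hp_meas : Measurable[m.prod inferInstance] fun q : Ω × ℝ => p q.2 q.1)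
    (hp_density : ∀ (f : ℝ → ℝ), Measurable f → (∃ C, ∀ x, |f x| ≤ C) →
      (P[fun ω => f (L ω)|m]) =ᵐ[P] fun ω => ∫ x, f x * p x ω ∂(P.map L)) :
    Integrable (fun q : Ω × ℝ => p q.2 q.1) (P.prod (P.map L)) := by
  have : IsProbabilityMeasure (P.map L) := Measure.isProbabilityMeasure_map hL.aemeasurable
  have hpm : Measurable fun q : Ω × ℝ => p q.2 q.1 := hp_meas.mono (prod_le_aux hm) le_rfl
  have h1 := hp_density (fun _ => 1) measurable_const ⟨1, by simp⟩
  rw [condExp_const hm] at h1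
  have h2 : ∀ᵐ ω ∂P, Integrable (fun x => p x ω) (P.map L) ∧ ∫ x, p x ω ∂(P.map L) = 1 := by
    filter_upwards [h1] with ω hω
    simp only [one_mul] at hω
    refine ⟨?_, hω.symm⟩
    by_contra hc
    rw [integral_undef hc] at hω
    exact one_ne_zero hω
  rw [integrable_prod_iff hpm.aestronglyMeasurable]
  refine ⟨h2.mono fun ω h => h.1, ?_⟩
  refine (integrable_const (1 : ℝ)).congr ?_
  filter_upwards [h2] with ω h
  simp only [Real.norm_eq_abs, abs_of_nonneg (hp_nonneg _ _)]
  exact h.2.symm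

theorem law_eq {Ω : Type*} {m m0 : MeasurableSpace Ω} (hm : m ≤ m0)
    (P : Measure Ω) [IsProbabilityMeasure P] (L : Ω → ℝ) (hL : Measurable L)
    (p : ℝ → Ω → ℝ) (hp_nonneg : ∀ x ω, 0 ≤ p x ω)
    (hp_meas : Measurable[m.prod inferInstance] fun q : Ω × ℝ => p q.2 q.1)
    (hp_density : ∀ (f : ℝ → ℝ), Measurable f → (∃ C, ∀ x, |f x| ≤ C) →
      (P[fun ω => f (L ω)|m]) =ᵐ[P] fun ω => ∫ x, f x * p x ω ∂(P.map L)) :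
    (P.map (fun ω => (ω, L ω))).trim (prod_le_aux hm) =
      ((P.prod (P.map L)).withDensity (fun q => ENNReal.ofReal (p q.2 q.1))).trim
        (prod_le_aux hm) := by
  have : IsProbabilityMeasure (P.map L) := Measure.isProbabilityMeasure_map hL.aemeasurable
  have hpm : Measurable fun q : Ω × ℝ => p q.2 q.1 := hp_meas.mono (prod_le_aux hm) le_rfl
  have hpi := density_integrable hm P L hL p hp_nonneg hp_meas hp_density
  have hgm : Measurable fun ω => (ω, L ω) := measurable_id.prodMk hL
  have : IsProbabilityMeasure (P.map (fun ω => (ω, L ω))) :=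
    Measure.isProbabilityMeasure_map hgm.aemeasurable
  have rect : ∀ A B, MeasurableSet[m] A → MeasurableSet B →
      (P.map (fun ω => (ω, L ω))).trim (prod_le_aux hm) (A ×ˢ B) =
      ((P.prod (P.map L)).withDensity (fun q => ENNReal.ofReal (p q.2 q.1))).trim
        (prod_le_aux hm) (A ×ˢ B) := by
    intro A B hA hB
    have hAB : MeasurableSet[m.prod inferInstance] (A ×ˢ B) := 
      @MeasurableSet.prod _ _ m _ _ _ hA hB
    have hAB' : MeasurableSet (A ×ˢ B) := (hm A hA).prod hB
    rw [trim_measurableSet_eq _ hAB, trim_measurableSet_eq _ hAB, Measure.map_apply hgm hAB',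
      withDensity_apply _ hAB', ← ofReal_integral_eq_lintegral_ofReal hpi.integrableOn
        (ae_of_all _ fun q => hp_nonneg _ _), setIntegral_prod _ hpi.integrableOn]
    have hd := hp_density (B.indicator 1) (measurable_one.indicator hB)
      ⟨1, fun x => by by_cases h : x ∈ B <;> simp [h]⟩
    have e1 : ∫ ω in A, ∫ x in B, p x ω ∂(P.map L) ∂P
        = ∫ ω in A, (P[fun ω => B.indicator (1 : ℝ → ℝ) (L ω)|m]) ω ∂P := by
      refine integral_congr_ae (ae_restrict_of_ae ?_)
      filter_upwards [hd] with ω h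
      rw [h, ← integral_indicator hB]
      refine integral_congr_ae (ae_of_all _ fun x => ?_)
      by_cases h : x ∈ B <;> simp [h]
    have hLB : MeasurableSet (L ⁻¹' B) := hL hB
    have e2 : (fun ω => B.indicator (1 : ℝ → ℝ) (L ω)) = (L ⁻¹' B).indicator 1 := by
      ext ω; by_cases h : L ω ∈ B <;> simp [h]
    simp only
    rw [e1, e2, setIntegral_condExp hm ((integrable_const 1).indicator hLB) hA,
      integral_indicator_one hLB, ofReal_measureReal, Measure.restrict_apply hLB]
    congr 1
    ext ω; simp [and_comm]
  have : IsFiniteMeasure ((P.map (fun ω => (ω, L ω))).trim (prod_le_aux hm)) := 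
    isFiniteMeasure_trim _
  refine @ext_of_generate_finite (Ω × ℝ) (m.prod inferInstance) _ _ _
    (@generateFrom_prod Ω ℝ m _).symm (@isPiSystem_prod Ω ℝ m _) _ ?_ ?_
  · rintro _ ⟨A, hA, B, hB, rfl⟩
    exact rect A B hA hB
  · rw [← univ_prod_univ]
    exact rect univ univ MeasurableSet.univ MeasurableSet.univ

theorem transfer {Ω : Type*} {m m0 : MeasurableSpace Ω} (hm : m ≤ m0)
    (P : Measure Ω) [IsProbabilityMeasure P] (L : Ω → ℝ) (hL : Measurable L)
    (p : ℝ → Ω → ℝ) (hp_nonneg : ∀ x ω, 0 ≤ p x ω)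
    (hp_meas : Measurable[m.prod inferInstance] fun q : Ω × ℝ => p q.2 q.1)
    (hp_density : ∀ (f : ℝ → ℝ), Measurable f → (∃ C, ∀ x, |f x| ≤ C) →
      (P[fun ω => f (L ω)|m]) =ᵐ[P] fun ω => ∫ x, f x * p x ω ∂(P.map L))
    (H : Ω × ℝ → ℝ) (hH : Measurable[m.prod inferInstance] H)
    (hint : Integrable (fun q => H q * p q.2 q.1) (P.prod (P.map L))) :
    Integrable (fun ω => H (ω, L ω)) P ∧
      ∫ ω, H (ω, L ω) ∂P = ∫ q, H q * p q.2 q.1 ∂(P.prod (P.map L)) := by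
  have hpm : Measurable fun q : Ω × ℝ => p q.2 q.1 := hp_meas.mono (prod_le_aux hm) le_rfl
  have hgm : Measurable fun ω => (ω, L ω) := measurable_id.prodMk hL
  have hHs : StronglyMeasurable[m.prod inferInstance] H := Measurable.stronglyMeasurable hH
  have hHm : Measurable H := hH.mono (prod_le_aux hm) le_rfl
  have law := law_eq hm P L hL p hp_nonneg hp_meas hp_density
  have i2 : Integrable H
      ((P.prod (P.map L)).withDensity (fun q => ENNReal.ofReal (p q.2 q.1))) := by
    rw [integrable_withDensity_iff hpm.ennreal_ofReal (ae_of_all _ fun q => by simp)]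
    simpa only [ENNReal.toReal_ofReal (hp_nonneg _ _)] using hint
  have i3 := i2.trim (prod_le_aux hm) hHs
  rw [← law] at i3
  have i4 := integrable_of_integrable_trim _ i3
  refine ⟨i4.comp_measurable hgm, ?_⟩
  rw [← integral_map (φ := fun ω => (ω, L ω)) hgm.aemeasurable hHm.aestronglyMeasurable,
    integral_trim (prod_le_aux hm) hHs, law, ← integral_trim (prod_le_aux hm) hHs,
    integral_withDensity_eq_integral_toReal_smul hpm.ennreal_ofReal
      (ae_of_all _ fun q => by simp)]
  refine integral_congr_ae (ae_of_all _ fun q => ?_)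
  simp [ENNReal.toReal_ofReal (hp_nonneg _ _), mul_comm]

theorem runInf_measurable {Ω : Type*} {m : MeasurableSpace Ω} (X : ℝ≥0 → Ω → ℝ) (t : ℝ≥0)
    (hX : ∀ s ≤ t, Measurable[m] (X s)) (hX_cont : ∀ ω, Continuous fun s => X s ω) :
    Measurable[m] (runInf X t) := by
  have : Nonempty (Set.Icc (0 : ℝ≥0) t) := ⟨⟨0, by simp⟩⟩
  refine measurable_of_Ici fun a => ?_
  have : runInf X t ⁻¹' Ici a
      = ⋂ k : ℕ, {ω | a ≤ X (TopologicalSpace.denseSeq (Set.Icc (0 : ℝ≥0) t) k).1 ω} := by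
    ext ω
    have hc : Continuous fun s : Set.Icc (0 : ℝ≥0) t => X s.1 ω :=
      (hX_cont ω).comp continuous_subtype_val
    have hb : BddBelow (range fun s : Set.Icc (0 : ℝ≥0) t => X s.1 ω) :=
      (isCompact_range hc).bddBelow
    simp only [mem_preimage, mem_Ici, mem_iInter, mem_ofPred_eq, runInf]
    rw [le_ciInf_iff hb]
    refine ⟨fun h k => h _, fun h s => ?_⟩
    have hcl : IsClosed {s : Set.Icc (0 : ℝ≥0) t | a ≤ X s.1 ω} :=
      isClosed_le continuous_const hc
    have hsub : closure (range (TopologicalSpace.denseSeq (Set.Icc (0 : ℝ≥0) t)))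
        ⊆ {s : Set.Icc (0 : ℝ≥0) t | a ≤ X s.1 ω} :=
      hcl.closure_subset_iff.2 (by rintro _ ⟨k, rfl⟩; exact h k)
    rw [(TopologicalSpace.denseRange_denseSeq _).closure_range] at hsub
    exact hsub (mem_univ s)
  rw [this]
  exact MeasurableSet.iInter fun k =>
    measurableSet_le measurable_const (hX _ (TopologicalSpace.denseSeq (Set.Icc (0 : ℝ≥0) t) k).2.2)

/-- the survival indicator as a function on `Ω × ℝ` -/
def survInd {Ω : Type*} (X : ℝ≥0 → Ω → ℝ) (s : ℝ≥0) (q : Ω × ℝ) : ℝ :=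
  if q.2 < runInf X s q.1 then 1 else 0

theorem survInd_measurable {Ω : Type*} {m : MeasurableSpace Ω} (X : ℝ≥0 → Ω → ℝ) (s : ℝ≥0)
    (h : Measurable[m] (runInf X s)) : Measurable[m.prod inferInstance] (survInd X s) := by
  refine Measurable.ite ?_ measurable_const measurable_const
  exact measurableSet_lt (@measurable_snd Ω ℝ m _) (h.comp (@measurable_fst Ω ℝ m _))

theorem survInd_abs_le {Ω : Type*} (X : ℝ≥0 → Ω → ℝ) (s : ℝ≥0) (q : Ω × ℝ) :
    |survInd X s q| ≤ 1 := by
  unfold survInd; split_ifs <;> simp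

theorem fubini_version {Ω : Type*} {m m0 : MeasurableSpace Ω} (hm : m ≤ m0)
    (P : Measure Ω) [IsProbabilityMeasure P] (μ : Measure ℝ) [IsProbabilityMeasure μ]
    (Y w : Ω × ℝ → ℝ) (hY : Integrable Y (P.prod μ)) (hw : Measurable[m.prod inferInstance] w)
    (hv : ∀ᵐ x ∂μ, (fun ω => w (ω, x)) =ᵐ[P] P[fun ω => Y (ω, x)|m]) :
    Integrable w (P.prod μ) ∧ ∀ S, MeasurableSet[m.prod inferInstance] S →
      ∫ q in S, w q ∂(P.prod μ) = ∫ q in S, Y q ∂(P.prod μ) := by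
  have hwm : Measurable w := hw.mono (prod_le_aux hm) le_rfl
  have hwi : Integrable w (P.prod μ) := by
    rw [integrable_prod_iff' hwm.aestronglyMeasurable]
    refine ⟨?_, ?_⟩
    · filter_upwards [hv] with x hx
      exact integrable_condExp.congr hx.symm
    · refine hY.norm.integral_prod_right.mono' ?_ ?_
      · exact hwm.norm.stronglyMeasurable.integral_prod_left.aestronglyMeasurable
      · filter_upwards [hv] with x hx
        rw [Real.norm_of_nonneg (integral_nonneg fun _ => norm_nonneg _)]
        have : ∫ ω, ‖w (ω, x)‖ ∂P = ∫ ω, |(P[fun ω => Y (ω, x)|m]) ω| ∂P := by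
          refine integral_congr_ae ?_
          filter_upwards [hx] with ω h
          rw [h, Real.norm_eq_abs]
        rw [this]
        exact integral_abs_condExp_le _
  refine ⟨hwi, fun S hS => ?_⟩
  have hS' : MeasurableSet S := prod_le_aux hm S hS
  rw [← integral_indicator hS', ← integral_indicator hS',
    integral_prod_symm _ (hwi.indicator hS'), integral_prod_symm _ (hY.indicator hS')]
  refine integral_congr_ae ?_
  filter_upwards [hv, hY.prod_left_ae] with x hx hYx
  have hSx : MeasurableSet[m] {ω | (ω, x) ∈ S} := (@measurable_prodMk_right Ω ℝ m _ x) hS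
  have e : ∀ f : Ω × ℝ → ℝ, ∫ ω, S.indicator f (ω, x) ∂P
      = ∫ ω in {ω | (ω, x) ∈ S}, f (ω, x) ∂P := by
    intro f
    rw [← integral_indicator (hm _ hSx)]
    refine integral_congr_ae (ae_of_all _ fun ω => ?_)
    by_cases h : (ω, x) ∈ S <;> simp [h]
  rw [e, e, ← setIntegral_condExp hm hYx hSx]
  exact integral_congr_ae (ae_restrict_of_ae hx)

/-- **Key step in the proof of Proposition 3.2.** Under Jacod's density hypothesis, for a
partition `t = t_0 < t_1 < ⋯ < t_{n+1} = T` and bounded `F_{t_i}`-measurable `Z_i`, there is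
an `F_t ⊗ B(ℝ)`-measurable `w` such that for `P^L`-a.e. `x`, `w(·,x)` is a version of
`E_P[Σ_i Z_i (F^M_{t_{i+1}}(x) − F^M_{t_i}(x)) | F_t]`; and for every such `w`, `P`-a.s.,
`E_P[Σ_i Z_i 1_{t_i < τ ≤ t_{i+1}} | G^M_t] = − w(·,L)/p_t(L)`. -/
theorem full_information_recovery_term
    {Ω : Type*} [m0 : MeasurableSpace Ω] {P : Measure Ω} [IsProbabilityMeasure P]
    (F : Filtration ℝ≥0 m0)
    (X : ℝ≥0 → Ω → ℝ) (hX_adapted : Adapted F X)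
    (hX_cont : ∀ ω, Continuous fun s => X s ω)
    (L : Ω → ℝ) (hL : Measurable L)
    (hX0 : ∀ᵐ ω ∂P, L ω < X 0 ω)
    (τ : Ω → ℝ≥0)
    (hτ : ∀ (θ : ℝ≥0) (ω : Ω), θ < τ ω ↔ L ω < runInf X θ ω)
    -- Jacod's density hypothesis
    (p : ℝ≥0 → ℝ → Ω → ℝ)
    (hp_nonneg : ∀ t x ω, 0 ≤ p t x ω)
    (hp_meas : ∀ t, Measurable[(F t).prod inferInstance] fun q : Ω × ℝ => p t q.2 q.1)
    (hp_pos : ∀ t, ∀ᵐ ω ∂P, 0 < p t (L ω) ω)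
    (hp_density : ∀ (t : ℝ≥0) (f : ℝ → ℝ), Measurable f → (∃ C, ∀ x, |f x| ≤ C) →
      (P[fun ω => f (L ω)|F t]) =ᵐ[P] fun ω => ∫ x, f x * p t x ω ∂(P.map L))
    -- the partition `t = t_0 < t_1 < ⋯ < t_{n+1} = T` and the stepwise recovery payments
    (n : ℕ) (ts : Fin (n + 2) → ℝ≥0) (hts : StrictMono ts)
    (t T : ℝ≥0) (hts0 : ts 0 = t) (htsT : ts (Fin.last (n + 1)) = T)
    (Z : Fin (n + 1) → Ω → ℝ)
    (hZ_meas : ∀ i, Measurable[F (ts i.castSucc)] (Z i))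
    (hZ_bdd : ∀ i, ∃ C, ∀ ω, |Z i ω| ≤ C) :
    (∃ w : Ω × ℝ → ℝ, Measurable[(F t).prod inferInstance] w ∧
      ∀ᵐ x ∂(P.map L), (fun ω => w (ω, x)) =ᵐ[P]
        P[fun ω => ∑ i : Fin (n + 1),
            Z i ω * (FM p X (ts i.succ) x ω - FM p X (ts i.castSucc) x ω)|F t]) ∧
    ∀ w : Ω × ℝ → ℝ, Measurable[(F t).prod inferInstance] w →
      (∀ᵐ x ∂(P.map L), (fun ω => w (ω, x)) =ᵐ[P]
        P[fun ω => ∑ i : Fin (n + 1),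
            Z i ω * (FM p X (ts i.succ) x ω - FM p X (ts i.castSucc) x ω)|F t]) →
      (P[fun ω => ∑ i : Fin (n + 1),
          Z i ω * (if ts i.castSucc < τ ω ∧ τ ω ≤ ts i.succ then 1 else 0)|
            F t ⊔ MeasurableSpace.comap L inferInstance])
        =ᵐ[P] fun ω => -(w (ω, L ω) / p t (L ω) ω) := by
  
  have hμ : IsProbabilityMeasure (P.map L) := Measure.isProbabilityMeasure_map hL.aemeasurable
  have hrun : ∀ s, Measurable[F s] (runInf X s) := fun s =>
    runInf_measurable X s (fun r hr => (hX_adapted r).mono (F.mono hr) le_rfl) hX_cont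
  have hsurv : ∀ s, Measurable[(F s).prod inferInstance] (survInd X s) := fun s =>
    survInd_measurable X s (hrun s)
  have hpi : ∀ s, Integrable (fun q : Ω × ℝ => p s q.2 q.1) (P.prod (P.map L)) := fun s =>
    density_integrable (F.le s) P L hL (p s) (hp_nonneg s) (hp_meas s) (hp_density s)
  have hle : ∀ i : Fin (n + 1), t ≤ ts i.castSucc := fun i => by
    rw [← hts0]; exact hts.monotone (Fin.zero_le _)
  have hlt : ∀ i : Fin (n + 1), ts i.castSucc ≤ ts i.succ := fun i =>
    hts.monotone (Fin.castSucc_lt_succ).le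
  have htr : ∀ S, MeasurableSet[(F t).prod inferInstance] S → ∀ (i : Fin (n + 1)) (s : ℝ≥0),
      ts i.castSucc ≤ s →
      Integrable (fun q : Ω × ℝ => S.indicator 1 q * (Z i q.1 * survInd X s q) * p s q.2 q.1)
        (P.prod (P.map L)) ∧
      Integrable (fun ω => S.indicator 1 (ω, L ω) * (Z i ω * survInd X s (ω, L ω))) P ∧
      ∫ ω, S.indicator 1 (ω, L ω) * (Z i ω * survInd X s (ω, L ω)) ∂P
        = ∫ q, S.indicator 1 q * (Z i q.1 * survInd X s q) * p s q.2 q.1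
          ∂(P.prod (P.map L)) := by
    intro S hS i s his
    have hSs : MeasurableSet[(F s).prod inferInstance] S :=
      prod_le_aux (F.mono ((hle i).trans his)) S hS
    have hH : Measurable[(F s).prod inferInstance]
        fun q : Ω × ℝ => S.indicator 1 q * (Z i q.1 * survInd X s q) := by
      refine Measurable.mul (Measurable.indicator measurable_const hSs)
        (Measurable.mul ?_ (hsurv s))
      exact ((hZ_meas i).mono (F.mono his) le_rfl).comp (@measurable_fst Ω ℝ (F s) _)
    obtain ⟨C, hC⟩ := hZ_bdd i
    have hint : Integrable
        (fun q : Ω × ℝ => S.indicator 1 q * (Z i q.1 * survInd X s q) * p s q.2 q.1)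
        (P.prod (P.map L)) := by
      refine (hpi s).bdd_mul (c := C)
        (hH.mono (prod_le_aux (F.le s)) le_rfl).aestronglyMeasurable (ae_of_all _ fun q => ?_)
      rw [Real.norm_eq_abs, abs_mul, abs_mul]
      have h1 : |S.indicator (1 : Ω × ℝ → ℝ) q| ≤ 1 := by by_cases h : q ∈ S <;> simp [h]
      have h2 := survInd_abs_le X s q
      have h3 := hC q.1
      have h0 := abs_nonneg (Z i q.1)
      calc |S.indicator (1 : Ω × ℝ → ℝ) q| * (|Z i q.1| * |survInd X s q|)
          ≤ 1 * (C * 1) := by gcongr; linarith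
        _ = C := by ring
    exact ⟨hint, transfer (F.le s) P L hL (p s) (hp_nonneg s) (hp_meas s) (hp_density s) _ hH hint⟩
  set Y : Ω × ℝ → ℝ := fun q => ∑ i : Fin (n + 1),
      Z i q.1 * (FM p X (ts i.succ) q.2 q.1 - FM p X (ts i.castSucc) q.2 q.1) with hYdef
  have hYterm : ∀ (S : Set (Ω × ℝ)) (q : Ω × ℝ), S.indicator 1 q * Y q = ∑ i : Fin (n + 1),
      (S.indicator 1 q * (Z i q.1 * survInd X (ts i.succ) q) * p (ts i.succ) q.2 q.1 -
      S.indicator 1 q * (Z i q.1 * survInd X (ts i.castSucc) q) * p (ts i.castSucc) q.2 q.1) := by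
    intro S q
    simp only [hYdef, Finset.mul_sum, FM, survInd]
    exact Finset.sum_congr rfl fun i _ => by ring
  have hYm : Measurable Y := by
    refine Finset.measurable_sum _ fun i _ => Measurable.mul ?_ (Measurable.sub ?_ ?_)
    · exact ((hZ_meas i).mono (F.le _) le_rfl).comp measurable_fst
    · exact Measurable.mul ((hp_meas _).mono (prod_le_aux (F.le _)) le_rfl)
        ((hsurv _).mono (prod_le_aux (F.le _)) le_rfl)
    · exact Measurable.mul ((hp_meas _).mono (prod_le_aux (F.le _)) le_rfl)
        ((hsurv _).mono (prod_le_aux (F.le _)) le_rfl)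
  have hYi : Integrable Y (P.prod (P.map L)) := by
    have : Y = fun q => (univ : Set (Ω × ℝ)).indicator 1 q * Y q := by
      ext q; simp
    rw [this]
    simp_rw [hYterm]
    refine integrable_finsetSum _ fun i _ => ?_
    exact (htr univ MeasurableSet.univ i _ (hlt i)).1.sub (htr univ MeasurableSet.univ i _ le_rfl).1
  refine ⟨?_, ?_⟩
  · obtain ⟨w, hw, h⟩ := exists_version_real (F.le t) P Y hYm
    refine ⟨w, hw, ?_⟩
    filter_upwards [hYi.prod_left_ae] with x hx
    exact h x hx
  intro w hw hv
  obtain ⟨hwi, hwS⟩ := fubini_version (F.le t) P (P.map L) Y w hYi hw hv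
  have hG : F t ⊔ MeasurableSpace.comap L inferInstance
      = MeasurableSpace.comap (fun ω => (ω, L ω)) ((F t).prod inferInstance) := by
    rw [MeasurableSpace.prod, MeasurableSpace.comap_sup, MeasurableSpace.comap_comp,
      MeasurableSpace.comap_comp]
    congr 1
    exact MeasurableSpace.comap_id.symm
  have hGle : F t ⊔ MeasurableSpace.comap L inferInstance ≤ m0 :=
    sup_le (F.le t) hL.comap_le
  set V : Ω → ℝ := fun ω => ∑ i : Fin (n + 1),
      Z i ω * (if ts i.castSucc < τ ω ∧ τ ω ≤ ts i.succ then 1 else 0) with hVdef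
  have hVterm : ∀ (S : Set (Ω × ℝ)) ω, S.indicator 1 (ω, L ω) * V ω = ∑ i : Fin (n + 1),
      (S.indicator 1 (ω, L ω) * (Z i ω * survInd X (ts i.castSucc) (ω, L ω)) -
      S.indicator 1 (ω, L ω) * (Z i ω * survInd X (ts i.succ) (ω, L ω))) := by
    intro S ω
    simp only [hVdef, Finset.mul_sum, survInd, ← hτ]
    refine Finset.sum_congr rfl fun i _ => ?_
    have h1 : ts i.succ < τ ω → ts i.castSucc < τ ω := fun h => (hlt i).trans_lt h
    by_cases ha : ts i.succ < τ ω
    · simp [ha, h1 ha]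
    · by_cases hb : ts i.castSucc < τ ω
      · simp [ha, hb, not_lt.1 ha]
      · simp [ha, hb]
  have hVi : Integrable V P := by
    have : V = fun ω => (univ : Set (Ω × ℝ)).indicator 1 (ω, L ω) * V ω := by
      ext q; simp
    rw [this]
    simp_rw [hVterm]
    refine integrable_finsetSum _ fun i _ => ?_
    exact (htr univ MeasurableSet.univ i _ le_rfl).2.1.sub
      (htr univ MeasurableSet.univ i _ (hlt i)).2.1
  have hVY : ∀ S, MeasurableSet[(F t).prod inferInstance] S →
      ∫ ω, S.indicator 1 (ω, L ω) * V ω ∂P = - ∫ q, S.indicator 1 q * Y q ∂(P.prod (P.map L)) := by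
    intro S hS
    simp_rw [hVterm, hYterm]
    rw [integral_finsetSum, integral_finsetSum, ← Finset.sum_neg_distrib]
    rotate_left
    · exact fun i _ => (htr S hS i _ (hlt i)).1.sub (htr S hS i _ le_rfl).1
    · exact fun i _ => (htr S hS i _ le_rfl).2.1.sub (htr S hS i _ (hlt i)).2.1
    refine Finset.sum_congr rfl fun i _ => ?_
    rw [integral_sub (htr S hS i _ le_rfl).2.1 (htr S hS i _ (hlt i)).2.1,
      integral_sub (htr S hS i _ (hlt i)).1 (htr S hS i _ le_rfl).1,
      (htr S hS i _ le_rfl).2.2, (htr S hS i _ (hlt i)).2.2]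
    ring
  -- the candidate
  have hpos : MeasurableSet[(F t).prod inferInstance] {q : Ω × ℝ | 0 < p t q.2 q.1} :=
    measurableSet_lt measurable_const (hp_meas t)
  have hwp : Measurable[(F t).prod inferInstance] fun q : Ω × ℝ => w q / p t q.2 q.1 :=
    Measurable.div hw (hp_meas t)
  have hWtr : ∀ S, MeasurableSet[(F t).prod inferInstance] S →
      (∀ q ∈ S, 0 < p t q.2 q.1) →
      Integrable (fun ω => S.indicator 1 (ω, L ω) * (w (ω, L ω) / p t (L ω) ω)) P ∧
      ∫ ω, S.indicator 1 (ω, L ω) * (w (ω, L ω) / p t (L ω) ω) ∂P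
        = ∫ q, S.indicator 1 q * w q ∂(P.prod (P.map L)) := by
    intro S hS hSp
    have hS' : MeasurableSet S := prod_le_aux (F.le t) S hS
    have e : (fun q : Ω × ℝ => S.indicator 1 q * (w q / p t q.2 q.1) * p t q.2 q.1)
        = fun q => S.indicator 1 q * w q := by
      ext q
      by_cases h : q ∈ S
      · have := (hSp q h).ne'
        simp [h]
        field_simp
      · simp [h]
    have e2 : (fun q : Ω × ℝ => S.indicator 1 q * w q) = S.indicator w := by
      ext q; by_cases h : q ∈ S <;> simp [h]
    have := transfer (F.le t) P L hL (p t) (hp_nonneg t) (hp_meas t) (hp_density t)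
      (fun q => S.indicator 1 q * (w q / p t q.2 q.1))
      (Measurable.mul (Measurable.indicator measurable_const hS) hwp)
      (by rw [e, e2]; exact hwi.indicator hS')
    rw [e] at this
    exact this
  have hWi : Integrable (fun ω => w (ω, L ω) / p t (L ω) ω) P := by
    refine (hWtr _ hpos fun q hq => hq).1.congr ?_
    filter_upwards [hp_pos t] with ω h
    simp [h]
  symm
  refine ae_eq_condExp_of_forall_setIntegral_eq hGle hVi (fun s _ _ => hWi.neg.integrableOn) ?_ ?_
  · intro s hs _
    have hs0 : MeasurableSet s := hGle s hs
    rw [hG] at hs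
    obtain ⟨S, hS, rfl⟩ := hs
    have hS' := MeasurableSet.inter hS hpos
    have e : ∀ f : Ω → ℝ, ∫ ω in (fun ω => (ω, L ω)) ⁻¹' S, f ω ∂P =
        ∫ ω, (S ∩ {q : Ω × ℝ | 0 < p t q.2 q.1}).indicator 1 (ω, L ω) * f ω ∂P := by
      intro f
      rw [← integral_indicator hs0]
      refine integral_congr_ae ?_
      filter_upwards [hp_pos t] with ω h
      by_cases h' : (ω, L ω) ∈ S <;> simp [h, h']
    have e2 : ∀ f : Ω × ℝ → ℝ, ∫ q, (S ∩ {q : Ω × ℝ | 0 < p t q.2 q.1}).indicator 1 q * f q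
          ∂(P.prod (P.map L)) = ∫ q in S ∩ {q : Ω × ℝ | 0 < p t q.2 q.1}, f q
          ∂(P.prod (P.map L)) := by
      intro f
      rw [← integral_indicator (prod_le_aux (F.le t) _ hS')]
      refine integral_congr_ae (ae_of_all _ fun q => ?_)
      by_cases h' : q ∈ S ∩ {q : Ω × ℝ | 0 < p t q.2 q.1}
      · simp only [h', indicator_of_mem, Pi.one_apply, one_mul]
      · simp only [h', not_false_eq_true, indicator_of_notMem, zero_mul]
    rw [integral_neg, e, e, hVY _ hS', (hWtr _ hS' fun q hq => hq.2).2, e2, e2, hwS _ hS']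
  · refine (Measurable.stronglyMeasurable ?_).aestronglyMeasurable
    rw [hG]
    exact Measurable.neg (hwp.comp (comap_measurable _))
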